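/- For every integer k ≥ 2 there exists a positive integer s₀ such that the following holds for every integer s > s₀. If F ⊆ binom([ks+k],k) is a non-trivial k-graph on ks + k vertices with ν(F) ≤ s, then |F| ≤ |E₀(ks+k, k, s)|. -/

import Mathlib

/-- The `(x,y)`-shift of a single edge `A` with respect to the family `F`. -/
def shiftEdge (x y : ℕ) (F : Finset (Finset ℕ)) (A : Finset ℕ) : Finset ℕ :=
  if y ∈ A ∧ x ∉ A ∧ insert x (A.erase y) ∉ F then insert x (A.erase y) else A

/-- The `(x,y)`-shift of a family `F`. -/
def shiftFam (x y : ℕ) (F : Finset (Finset ℕ)) : Finset (Finset ℕ) :=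
  F.image (shiftEdge x y F)

/-- The matching number: the largest size of a pairwise-disjoint subfamily. -/
noncomputable def matchingNumber (F : Finset (Finset ℕ)) : ℕ :=
  sSup {m | ∃ M ⊆ F, M.card = m ∧ (M : Set (Finset ℕ)).PairwiseDisjoint id}

/-- `F` is non-trivial on `[n]`: no vertex of `[n] = {1,…,n}` is isolated. -/
def NonTrivial (n : ℕ) (F : Finset (Finset ℕ)) : Prop :=
  ∀ v ∈ Finset.Icc 1 n, ∃ A ∈ F, v ∈ A

/-- `F` is shifted on `Y`: all `(x,y)`-shifts with `x < y` in `Y` fix `F`. -/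
def ShiftedOn (Y : Finset ℕ) (F : Finset (Finset ℕ)) : Prop :=
  ∀ x ∈ Y, ∀ y ∈ Y, x < y → shiftFam x y F = F

/-- The clique number of the `k`-graph `F` on `[n]`. -/
noncomputable def cliqueNum (n k : ℕ) (F : Finset (Finset ℕ)) : ℕ :=
  sSup {m | ∃ U ⊆ Finset.Icc 1 n, U.card = m ∧ Finset.powersetCard k U ⊆ F}

/-- The vertex-cover number of the `k`-graph `F` on `[n]`. -/
noncomputable def coverNum (n : ℕ) (F : Finset (Finset ℕ)) : ℕ :=
  sInf {t | ∃ T ⊆ Finset.Icc 1 n, T.card = t ∧ ∀ A ∈ F, (A ∩ T).Nonempty}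

/-- The link `N_F(x)`. -/
def nbr (F : Finset (Finset ℕ)) (x : ℕ) : Finset (Finset ℕ) :=
  (F.filter fun A => x ∈ A).image fun A => A.erase x

/-- The link `N_F(x,y)`. -/
def nbr2 (F : Finset (Finset ℕ)) (x y : ℕ) : Finset (Finset ℕ) :=
  (F.filter fun A => x ∈ A ∧ y ∈ A).image fun A => (A.erase x).erase y

/-- The link `N_F(x, ȳ)`. -/
def nbrBar (F : Finset (Finset ℕ)) (x y : ℕ) : Finset (Finset ℕ) :=
  (F.filter fun A => x ∈ A ∧ y ∉ A).image fun A => A.erase x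

/-- The extremal family `E₀(n,k,s)`. -/
def E0 (n k s : ℕ) : Finset (Finset ℕ) :=
  Finset.powersetCard k (Finset.Icc 1 (k * s + k - 2)) ∪
  ((Finset.powersetCard k (Finset.Icc 1 n)).filter
    (fun A => A \ Finset.Icc 1 (k * s + k - 2) = {k * s + k - 1} ∧
      (A ∩ Finset.Icc 1 (k - 1)).Nonempty)) ∪
  ((Finset.Icc (k * s + k) n).image (fun x => insert x (Finset.Icc 1 (k - 1))))

open Classical in
/-- The extremal family `E₁(n,k,s)`. -/
noncomputable def E1 (n k s : ℕ) : Finset (Finset ℕ) :=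
  Finset.powersetCard k (Finset.Icc 1 (k * s + k - 2)) ∪
  ((Finset.powersetCard k (Finset.Icc 1 n)).filter
    (fun A => 1 ∈ A ∧ ∃ x ∈ Finset.Icc (k * s + k - 1) n,
      A \ Finset.Icc 1 (k * s + k - 2) = {x}))

/-- `F` is `s`-saturated on `[n]`. -/
def Saturated (n k s : ℕ) (F : Finset (Finset ℕ)) : Prop :=
  matchingNumber F ≤ s ∧
  ∀ G ∈ Finset.powersetCard k (Finset.Icc 1 n), G ∉ F →
    matchingNumber (insert G F) = s + 1

/-!
A `k`-graph on `n = k (s + 1)` vertices with more edges than `E0` misses only `O(n ^ (k - 1))` of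
the `k`-sets. It has a perfect matching as soon as a bounded matching covers its vertices of low
degree: extend the bounded matching greedily over the vertices missing many edges, then augment,
exchanging `k - 1` random matching edges and `k` uncovered vertices, arranged as a `k × k` matrix,
for the rows of that matrix. Counting missing edges, at most two vertices have low degree. So if
there are no isolated vertices and no perfect matching, exactly two vertices `x` and `y` have low
degree, no edge contains both, and their links are nonempty cross-intersecting families of
`(k - 1)`-sets.

The sum of the sizes of two such families is largest when one of them is a single set. This is an
expansion property of the Kneser graph: the smallest sets of least expansion (atoms) are pairwise
disjoint, so they are blocks for the automorphism group. As the symmetric group acts primitively on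
the `(k - 1)`-sets, atoms are singletons. In `E0` the link of the last vertex is a single set.
-/

section Atoms

open Finset
open scoped Pointwise

variable {Ω : Type*} [DecidableEq Ω] {N : Ω → Finset Ω} {S T U : Finset Ω}

/-- The expansion of `S`, the surplus of its neighbourhood over `S`; it may be negative. -/
def expansion (N : Ω → Finset Ω) (S : Finset Ω) : ℤ := #(S.biUnion N) - #S

lemma expansion_union_add_expansion_inter_le (N : Ω → Finset Ω) (S T : Finset Ω) :
    expansion N (S ∪ T) + expansion N (S ∩ T) ≤ expansion N S + expansion N T := by
  have hinter : (S ∩ T).biUnion N ⊆ S.biUnion N ∩ T.biUnion N :=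
    subset_inter (biUnion_subset_biUnion_of_subset_left N inter_subset_left)
      (biUnion_subset_biUnion_of_subset_left N inter_subset_right)
  have hcard := card_union_add_card_inter S T
  have hcardN := card_union_add_card_inter (S.biUnion N) (T.biUnion N)
  have := card_le_card hinter
  simp only [expansion, union_biUnion]
  lia

variable {G : Type*} [Group G] [MulAction G Ω]

lemma biUnion_smul_of_equivariant (hequiv : ∀ (g : G) v, N (g • v) = g • N v) (g : G)
    (S : Finset Ω) : (g • S).biUnion N = g • S.biUnion N := by
  ext w
  simp only [mem_biUnion, mem_smul_finset, exists_exists_and_eq_and, hequiv]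
  grind

variable [Fintype Ω]

/-- A nonempty set of vertices of the graph with neighbourhoods `N` whose neighbourhood
`S.biUnion N` is not everything: the sets over which expansion is minimised. -/
structure IsFragment (N : Ω → Finset Ω) (S : Finset Ω) : Prop where
  nonempty : S.Nonempty
  biUnion_ne_univ : S.biUnion N ≠ univ

/-- An atom in the sense of isoperimetric theory: a fragment of least expansion, and of least
cardinality among those. -/
structure IsExpansionAtom (N : Ω → Finset Ω) (T : Finset Ω) : Prop extends IsFragment N T where
  expansion_le : ∀ ⦃U⦄, IsFragment N U → expansion N T ≤ expansion N U
  card_le : ∀ ⦃U⦄, IsFragment N U → expansion N U ≤ expansion N T → #T ≤ #U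

lemma IsFragment.card_biUnion_lt (hS : IsFragment N S) : #(S.biUnion N) < Fintype.card Ω :=
  (card_lt_iff_ne_univ _).2 hS.biUnion_ne_univ

lemma IsFragment.exists_isExpansionAtom (hS : IsFragment N S) : ∃ T, IsExpansionAtom N T := by
  classical
  obtain ⟨T, hT, hmin⟩ := exists_min_image ({T | IsFragment N T} : Finset (Finset Ω))
    (fun T ↦ toLex (expansion N T, #T)) ⟨S, by simpa using hS⟩
  simp only [mem_filter, mem_univ, true_and, Prod.Lex.toLex_le_toLex] at hT hmin
  refine ⟨T, hT, fun U hU ↦ ?_, fun U hU hle ↦ ?_⟩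
  · exact (hmin U hU).elim le_of_lt fun h ↦ h.1.le
  · exact ((hmin U hU).resolve_left hle.not_gt).2

/-- The complement of the neighbourhood of `T` is again a fragment, of no larger expansion. -/
lemma IsExpansionAtom.card_add_card_biUnion_le (hsymm : ∀ v w, w ∈ N v → v ∈ N w)
    (hT : IsExpansionAtom N T) : #T + #(T.biUnion N) ≤ Fintype.card Ω := by
  set R := (T.biUnion N)ᶜ
  have hNR : R.biUnion N ⊆ Tᶜ := by
    intro w hw
    obtain ⟨v, hv, hvw⟩ := mem_biUnion.1 hw
    exact mem_compl.2 fun hwT ↦ mem_compl.1 hv (mem_biUnion.2 ⟨w, hwT, hsymm v w hvw⟩)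
  have hcardR : #R + #(T.biUnion N) = Fintype.card Ω := card_compl_add_card _
  have hcardT := card_compl_add_card T
  have hcardNR := card_le_card hNR
  have hTpos := hT.nonempty.card_pos
  have hTlt := hT.card_biUnion_lt
  have hR : IsFragment N R :=
    ⟨card_pos.1 (by lia), (card_lt_iff_ne_univ _).1 (by lia)⟩
  have := hT.card_le hR (by simp only [expansion]; lia)
  lia

lemma IsExpansionAtom.card_eq (hT : IsExpansionAtom N T) (hU : IsExpansionAtom N U) : #T = #U :=
  le_antisymm (hT.card_le hU.toIsFragment (hU.expansion_le hT.toIsFragment))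
    (hU.card_le hT.toIsFragment (hT.expansion_le hU.toIsFragment))

/-- If two distinct atoms met, their intersection would be too small to have least expansion, so
by submodularity their union, still a fragment, would have less than the least expansion. -/
lemma IsExpansionAtom.eq_of_inter_nonempty (hsymm : ∀ v w, w ∈ N v → v ∈ N w)
    (hT : IsExpansionAtom N T) (hU : IsExpansionAtom N U) (hTU : (T ∩ U).Nonempty) : T = U := by
  have hcard := hT.card_eq hU
  suffices h : #T ≤ #(T ∩ U) from
    (eq_of_subset_of_card_le inter_subset_left h).symm.trans
      (eq_of_subset_of_card_le inter_subset_right (hcard ▸ h))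
  have hinter : IsFragment N (T ∩ U) := ⟨hTU, fun h ↦ hT.biUnion_ne_univ <|
    univ_subset_iff.1 (h ▸ biUnion_subset_biUnion_of_subset_left N inter_subset_left)⟩
  by_contra! hlt
  have hexp : expansion N T < expansion N (T ∩ U) := by
    by_contra! hle
    exact hlt.not_ge (hT.card_le hinter hle)
  have hsub := expansion_union_add_expansion_inter_le N T U
  have hunion : IsFragment N (T ∪ U) := by
    refine ⟨hT.nonempty.mono subset_union_left, (card_lt_iff_ne_univ _).1 ?_⟩
    have := hU.card_add_card_biUnion_le hsymm
    have := card_union_add_card_inter T U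
    have := hTU.card_pos
    simp only [expansion] at hsub hexp
    lia
  have := hU.expansion_le hunion
  lia

lemma IsExpansionAtom.smul (hequiv : ∀ (g : G) v, N (g • v) = g • N v)
    (hT : IsExpansionAtom N T) (g : G) : IsExpansionAtom N (g • T) := by
  have hexp : expansion N (g • T) = expansion N T := by
    simp only [expansion, biUnion_smul_of_equivariant hequiv, card_smul_finset]
  refine ⟨⟨hT.nonempty.smul_finset, (card_lt_iff_ne_univ _).1 ?_⟩, fun U hU ↦ ?_,
    fun U hU hle ↦ ?_⟩
  · rw [biUnion_smul_of_equivariant hequiv, card_smul_finset]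
    exact hT.card_biUnion_lt
  · exact hexp ▸ hT.expansion_le hU
  · rw [card_smul_finset]
    exact hT.card_le hU (hexp ▸ hle)

lemma IsExpansionAtom.isBlock (hsymm : ∀ v w, w ∈ N v → v ∈ N w)
    (hequiv : ∀ (g : G) v, N (g • v) = g • N v) (hT : IsExpansionAtom N T) :
    MulAction.IsBlock G (T : Set Ω) := by
  rw [MulAction.isBlock_iff_smul_eq_of_nonempty]
  intro g hg
  rw [← coe_smul_finset, ← coe_inter, coe_nonempty] at hg
  rw [← coe_smul_finset, (hT.smul hequiv g).eq_of_inter_nonempty hsymm hT hg]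

lemma IsExpansionAtom.exists_eq_singleton [MulAction.IsPreprimitive G Ω]
    (hsymm : ∀ v w, w ∈ N v → v ∈ N w) (hequiv : ∀ (g : G) v, N (g • v) = g • N v) {v : Ω}
    (hv : (N v).Nonempty) (hT : IsExpansionAtom N T) : ∃ w, T = {w} := by
  rcases (hT.isBlock hsymm hequiv).subsingleton_or_eq_univ with hsub | huniv
  · obtain ⟨w, hw⟩ := hT.nonempty
    exact ⟨w, by ext u; exact ⟨fun hu ↦ mem_singleton.2 (hsub hu hw), fun hu ↦ by simp_all⟩⟩
  · have hle := hT.card_add_card_biUnion_le hsymm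
    rw [coe_eq_univ.1 huniv, card_univ] at hle
    obtain ⟨w, hw⟩ := hv
    have := card_pos.2 ⟨w, mem_biUnion.2 ⟨v, mem_univ v, hw⟩⟩
    lia

theorem card_add_card_le_card_biUnion_add_one_of_isPreprimitive [MulAction.IsPreprimitive G Ω]
    (hsymm : ∀ v w, w ∈ N v → v ∈ N w) (hequiv : ∀ (g : G) v, N (g • v) = g • N v) {v : Ω}
    (hv : (N v).Nonempty) (hS : IsFragment N S) : #S + #(N v) ≤ #(S.biUnion N) + 1 := by
  obtain ⟨T, hT⟩ := hS.exists_isExpansionAtom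
  obtain ⟨w, rfl⟩ := hT.exists_eq_singleton hsymm hequiv hv
  obtain ⟨g, rfl⟩ := MulAction.exists_smul_eq G w v
  have := hT.expansion_le hS
  simp only [expansion, singleton_biUnion, card_singleton] at this
  rw [hequiv, card_smul_finset]
  lia

end Atoms

section CrossIntersecting

open Finset
open scoped Pointwise

/-- The Kneser neighbourhood of `A`: the sets of the same size `a` that are disjoint from `A`. -/
def kneserNeighbors {β : Type*} [Fintype β] [DecidableEq β] {a : ℕ} (A : Set.powersetCard β a) :
    Finset (Set.powersetCard β a) :=
  {B | Disjoint (A : Finset β) (B : Finset β)}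

section Kneser

variable {β : Type*} [Fintype β] [DecidableEq β] {a : ℕ}

lemma mem_kneserNeighbors {A B : Set.powersetCard β a} :
    B ∈ kneserNeighbors A ↔ Disjoint (A : Finset β) (B : Finset β) := by
  simp [kneserNeighbors]

lemma kneserNeighbors_smul (g : Equiv.Perm β) (A : Set.powersetCard β a) :
    kneserNeighbors (g • A) = g • kneserNeighbors A := by
  ext B
  rw [mem_kneserNeighbors, ← inv_smul_mem_iff, mem_kneserNeighbors, Set.powersetCard.coe_smul,
    Set.powersetCard.coe_smul, ← disjoint_coe, ← disjoint_coe, coe_smul_finset, coe_smul_finset,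
    ← Set.disjoint_smul_set (a := g⁻¹), inv_smul_smul]

lemma card_kneserNeighbors (A : Set.powersetCard β a) :
    #(kneserNeighbors A) = (Fintype.card β - a).choose a := by
  have himage : (kneserNeighbors A).map (Function.Embedding.subtype _) =
      powersetCard a (A : Finset β)ᶜ := by
    ext B
    simp only [mem_map, mem_kneserNeighbors, mem_powersetCard, subset_compl_iff_disjoint_left]
    exact ⟨fun ⟨C, hAC, hCB⟩ ↦ hCB ▸ ⟨hAC, C.2⟩, fun ⟨hAB, hB⟩ ↦ ⟨⟨B, hB⟩, hAB, rfl⟩⟩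
  rw [← card_map (Function.Embedding.subtype _), himage, card_powersetCard, card_compl,
    Set.powersetCard.card_eq]

theorem card_add_choose_le_card_biUnion_kneserNeighbors_add_one (ha : a ≠ 0)
    (hβ : 2 * a < Fintype.card β) {S : Finset (Set.powersetCard β a)} (hS : S.Nonempty)
    (hne : S.biUnion kneserNeighbors ≠ univ) :
    #S + (Fintype.card β - a).choose a ≤ #(S.biUnion kneserNeighbors) + 1 := by
  have := Set.powersetCard.isPreprimitive_perm (α := β) (n := a) (by lia)
    (by rw [Nat.card_eq_fintype_card]; lia) (by rw [Nat.card_eq_fintype_card]; lia)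
  obtain ⟨A, -⟩ := id hS
  rw [← card_kneserNeighbors A]
  refine card_add_card_le_card_biUnion_add_one_of_isPreprimitive (G := Equiv.Perm β)
    (fun A B hB ↦ mem_kneserNeighbors.2 (mem_kneserNeighbors.1 hB).symm) kneserNeighbors_smul
    (card_pos.1 ?_) ⟨hS, hne⟩
  rw [card_kneserNeighbors]
  exact Nat.choose_pos (by lia)

end Kneser

theorem card_add_card_add_choose_le_of_forall_not_disjoint {β : Type*} [Fintype β] {a : ℕ}
    (hβ : 2 * a < Fintype.card β) {S T : Finset (Set.powersetCard β a)} (hS : S.Nonempty)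
    (hT : T.Nonempty) (hST : ∀ A ∈ S, ∀ B ∈ T, ¬ Disjoint (A : Finset β) (B : Finset β)) :
    #S + #T + (Fintype.card β - a).choose a ≤ (Fintype.card β).choose a + 1 := by
  classical
  have hdisj : Disjoint (S.biUnion kneserNeighbors) T := disjoint_left.2 fun B hB hBT ↦ by
    obtain ⟨A, hA, hAB⟩ := mem_biUnion.1 hB
    exact hST A hA B hBT (mem_kneserNeighbors.1 hAB)
  obtain ⟨A, hA⟩ := id hS
  obtain ⟨B, hB⟩ := hT
  have ha : a ≠ 0 := by
    rintro rfl
    exact hST A hA B hB (card_eq_zero.1 A.2 ▸ disjoint_empty_left _)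
  have hkneser := card_add_choose_le_card_biUnion_kneserNeighbors_add_one ha hβ hS
    fun h ↦ disjoint_left.1 hdisj (h ▸ mem_univ B) hB
  have hcard : #(S.biUnion kneserNeighbors) + #T ≤ (Fintype.card β).choose a := by
    rw [← card_union_of_disjoint hdisj, ← Nat.card_eq_fintype_card, ← Set.powersetCard.card,
      Nat.card_eq_fintype_card]
    exact card_le_univ _
  lia

variable {α : Type*} {X : Finset α} {a : ℕ} {S T : Finset (Finset α)}

/-- The members of `S` that are `a`-subsets of `X`, regarded as elements of
`Set.powersetCard X a`. -/
def traceOn [DecidableEq α] (X : Finset α) (a : ℕ) (S : Finset (Finset α)) :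
    Finset (Set.powersetCard X a) :=
  {A | (A : Finset X).map (Function.Embedding.subtype _) ∈ S}

lemma card_traceOn [DecidableEq α] (hS : S ⊆ powersetCard a X) : #(traceOn X a S) = #S := by
  refine card_bij (fun A _ ↦ (A : Finset X).map (Function.Embedding.subtype _))
    (fun A hA ↦ (mem_filter.1 hA).2) (fun A _ B _ h ↦ Subtype.ext (map_injective _ h))
    fun A hA ↦ ?_
  obtain ⟨hAX, hcard⟩ := mem_powersetCard.1 (hS hA)
  have hmap : (A.subtype (· ∈ X)).map (Function.Embedding.subtype _) = A :=
    subtype_map_of_mem hAX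
  refine ⟨⟨A.subtype (· ∈ X), ?_⟩, mem_filter.2 ⟨mem_univ _, hmap.symm ▸ hA⟩, hmap⟩
  rw [Set.powersetCard.mem_iff, ← card_map (Function.Embedding.subtype _), hmap, hcard]

theorem card_add_card_add_choose_le_of_cross_intersecting (hX : 2 * a < #X)
    (hS : S ⊆ powersetCard a X) (hT : T ⊆ powersetCard a X) (hSne : S.Nonempty)
    (hTne : T.Nonempty) (hST : ∀ A ∈ S, ∀ B ∈ T, ¬ Disjoint A B) :
    #S + #T + (#X - a).choose a ≤ (#X).choose a + 1 := by
  classical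
  rw [← card_pos, ← card_traceOn hS, card_pos] at hSne
  rw [← card_pos, ← card_traceOn hT, card_pos] at hTne
  have h := card_add_card_add_choose_le_of_forall_not_disjoint ((Fintype.card_coe X).symm ▸ hX)
    hSne hTne fun A hA B hB hAB ↦
      hST _ (mem_filter.1 hA).2 _ (mem_filter.1 hB).2 ((disjoint_map _).2 hAB)
  rwa [card_traceOn hS, card_traceOn hT, Fintype.card_coe] at h

end CrossIntersecting

section Degree

open Finset

variable {α : Type*} [DecidableEq α] {k : ℕ} {V : Finset α} {F K : Finset (Finset α)} {v w : α}

/-- The degree of the vertex `v` in the hypergraph `F`: the number of edges containing it. -/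
def vertexDegree (F : Finset (Finset α)) (v : α) : ℕ := #{A ∈ F | v ∈ A}

lemma vertexDegree_add_vertexDegree_sdiff (hF : F ⊆ K) (v : α) :
    vertexDegree F v + vertexDegree (K \ F) v = vertexDegree K v := by
  rw [vertexDegree, vertexDegree, ← card_union_of_disjoint
    (disjoint_filter_filter disjoint_sdiff), ← filter_union, union_sdiff_of_subset hF, vertexDegree]

lemma vertexDegree_powersetCard (hk : 1 ≤ k) (hv : v ∈ V) :
    vertexDegree (powersetCard k V) v = (#V - 1).choose (k - 1) := by
  simpa [vertexDegree] using
    card_filter_powersetCard_subset {v} V k (singleton_subset_iff.2 hv) (by simpa using hk)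

lemma card_filter_mem_mem_le (hF : F ⊆ powersetCard k V) (hv : v ∈ V) (hw : w ∈ V) (hvw : v ≠ w) :
    #{A ∈ F | v ∈ A ∧ w ∈ A} ≤ (#V - 2).choose (k - 2) := by
  have hsub : {A ∈ F | v ∈ A ∧ w ∈ A} ⊆ {A ∈ powersetCard k V | {v, w} ⊆ A} := by
    simpa only [insert_subset_iff, singleton_subset_iff] using filter_subset_filter _ hF
  refine (card_le_card hsub).trans ?_
  rcases lt_or_ge k #{v, w} with hk | hk
  · rw [filter_eq_empty_iff.2 fun A hA hvwA ↦
      (card_le_card hvwA).not_gt ((mem_powersetCard.1 hA).2 ▸ hk)]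
    exact Nat.zero_le _
  · rw [card_filter_powersetCard_subset _ _ _ (by grind) hk, card_pair hvw]

lemma sum_vertexDegree (hF : F ⊆ powersetCard k V) : ∑ v ∈ V, vertexDegree F v = k * #F := by
  have hcard : ∀ A ∈ F, #{v ∈ V | v ∈ A} = k := fun A hA ↦ by
    obtain ⟨hAV, hAk⟩ := mem_powersetCard.1 (hF hA)
    rw [filter_mem_eq_inter, inter_eq_right.2 hAV, hAk]
  calc ∑ v ∈ V, vertexDegree F v = ∑ A ∈ F, #{v ∈ V | v ∈ A} :=
        sum_card_bipartiteAbove_eq_sum_card_bipartiteBelow (fun v A ↦ v ∈ A)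
    _ = k * #F := by rw [sum_const_nat hcard, mul_comm]

lemma card_filter_lt_mul_vertexDegree_mul_le (hF : F ⊆ powersetCard k V) (b d : ℕ) :
    #{v ∈ V | b < d * vertexDegree F v} * b ≤ d * (k * #F) := by
  rw [← sum_vertexDegree hF, mul_sum]
  refine (card_nsmul_le_sum _ _ _ fun v hv ↦ (mem_filter.1 hv).2.le).trans ?_
  exact sum_le_sum_of_subset (filter_subset _ _)

end Degree

section Matching

open Finset

variable {α : Type*} [DecidableEq α] {k : ℕ} {V W L : Finset α}
  {F M M₀ : Finset (Finset α)} {A : Finset α} {v : α}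

/-- `M` is a matching in the hypergraph `F`: a family of pairwise disjoint edges. -/
structure IsMatchingIn {α : Type*} (M F : Finset (Finset α)) : Prop where
  subset : M ⊆ F
  pairwiseDisjoint : (M : Set (Finset α)).PairwiseDisjoint id

lemma IsMatchingIn.insert_of_disjoint (hM : IsMatchingIn M F) (hA : A ∈ F)
    (hAM : Disjoint A (M.biUnion id)) : IsMatchingIn (insert A M) F := by
  refine ⟨insert_subset hA hM.subset, ?_⟩
  rw [coe_insert, Set.pairwiseDisjoint_insert]
  exact ⟨hM.pairwiseDisjoint, fun B hB _ ↦ (disjoint_biUnion_right _ _ _).1 hAM B hB⟩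

lemma IsMatchingIn.biUnion_id_subset (hM : IsMatchingIn M F) (hF : F ⊆ powersetCard k V) :
    M.biUnion id ⊆ V :=
  biUnion_subset.2 fun _ hA ↦ (mem_powersetCard.1 (hF (hM.subset hA))).1

lemma IsMatchingIn.card_biUnion_id (hM : IsMatchingIn M F) (hF : F ⊆ powersetCard k V) :
    #(M.biUnion id) = k * #M := by
  rw [card_biUnion hM.pairwiseDisjoint, mul_comm]
  exact sum_const_nat fun A hA ↦ (mem_powersetCard.1 (hF (hM.subset hA))).2

lemma exists_mem_disjoint_of_mul_choose_lt_vertexDegree (hF : F ⊆ powersetCard k V) (hW : W ⊆ V)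
    (hv : v ∈ V \ W) (hdeg : #W * (#V - 2).choose (k - 2) < vertexDegree F v) :
    ∃ A ∈ F, v ∈ A ∧ Disjoint A W := by
  obtain ⟨hvV, hvW⟩ := mem_sdiff.1 hv
  have hmeet : #(W.biUnion fun w ↦ {A ∈ F | v ∈ A ∧ w ∈ A}) ≤ #W * (#V - 2).choose (k - 2) :=
    card_biUnion_le_card_mul _ _ _ fun w hw ↦
      card_filter_mem_mem_le hF hvV (hW hw) (ne_of_mem_of_not_mem hw hvW).symm
  obtain ⟨A, hA, hAW⟩ := exists_mem_notMem_of_card_lt_card (hmeet.trans_lt hdeg)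
  obtain ⟨hAF, hvA⟩ := mem_filter.1 hA
  refine ⟨A, hAF, hvA, disjoint_left.2 fun w hwA hw ↦ hAW ?_⟩
  exact mem_biUnion.2 ⟨w, hw, mem_filter.2 ⟨hAF, hvA, hwA⟩⟩

lemma IsMatchingIn.exists_superset_cover (hF : F ⊆ powersetCard k V) (hM₀ : IsMatchingIn M₀ F)
    (hL : L ⊆ V) {b : ℕ} (hb : k * (#M₀ + #L) ≤ b)
    (hdeg : ∀ v ∈ L \ M₀.biUnion id, b * (#V - 2).choose (k - 2) < vertexDegree F v) :
    ∃ M, IsMatchingIn M F ∧ M₀ ⊆ M ∧ #M ≤ #M₀ + #L ∧ L ⊆ M.biUnion id := by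
  induction L using Finset.induction_on with
  | empty => exact ⟨M₀, hM₀, Subset.rfl, by simp, by simp⟩
  | insert v L hvL ih =>
    rw [card_insert_of_notMem hvL] at hb ⊢
    rw [insert_subset_iff] at hL
    obtain ⟨M, hM, hM₀M, hcard, hcover⟩ := ih hL.2 ((Nat.mul_le_mul_left k (by lia)).trans hb)
      fun w hw ↦ hdeg w (by grind)
    by_cases hvM : v ∈ M.biUnion id
    · exact ⟨M, hM, hM₀M, by lia, insert_subset hvM hcover⟩
    have hvM₀ : v ∉ M₀.biUnion id := fun h ↦ hvM (biUnion_subset_biUnion_of_subset_left _ hM₀M h)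
    have hMb : #(M.biUnion id) ≤ b :=
      (hM.card_biUnion_id hF).trans_le ((Nat.mul_le_mul_left k (by lia)).trans hb)
    obtain ⟨A, hA, hvA, hAM⟩ := exists_mem_disjoint_of_mul_choose_lt_vertexDegree hF
      (hM.biUnion_id_subset hF) (mem_sdiff.2 ⟨hL.1, hvM⟩)
      ((Nat.mul_le_mul_right _ hMb).trans_lt (hdeg v (by grind)))
    refine ⟨insert A M, hM.insert_of_disjoint hA hAM, hM₀M.trans (subset_insert _ _),
      (card_insert_le _ _).trans (by lia), ?_⟩
    rw [biUnion_insert]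
    exact insert_subset (mem_union_left _ hvA) (hcover.trans subset_union_right)

end Matching

section Augmentation

open Finset

variable {α : Type*} [DecidableEq α] {k : ℕ} {V U : Finset α} {F M M' : Finset (Finset α)}

/-- `e E` enumerates the vertices of the `k`-set `E`, for each `E` in the family `𝓔`: the members
of `𝓔` become the columns of a matrix with `k` rows. -/
structure IsLabelling {α : Type*} {k : ℕ} (𝓔 : Finset (Finset α)) (e : Finset α → Fin k → α) :
    Prop where
  mem : ∀ E ∈ 𝓔, ∀ i, e E i ∈ E
  injective : ∀ E ∈ 𝓔, Function.Injective (e E)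

/-- The `i`-th row of the matrix whose columns are the members of `Q`, as labelled by `e`. -/
def labelRow (e : Finset α → Fin k → α) (i : Fin k) (Q : Finset (Finset α)) : Finset α :=
  Q.image fun E ↦ e E i

section Labelling

variable {𝓔 Q : Finset (Finset α)} {E : Finset α} {e : Finset α → Fin k → α}

lemma exists_isLabelling {α : Type*} {𝓔 : Finset (Finset α)} [Nonempty α]
    (h𝓔 : ∀ E ∈ 𝓔, #E = k) : ∃ e : Finset α → Fin k → α, IsLabelling 𝓔 e := by
  have hlabel : ∀ E ∈ 𝓔, ∃ e : Fin k → α, (∀ i, e i ∈ E) ∧ Function.Injective e := fun E hE ↦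
    let f := (E.equivFinOfCardEq (h𝓔 E hE)).symm
    ⟨fun i ↦ f i, fun i ↦ (f i).2, Subtype.val_injective.comp f.injective⟩
  choose! e hmem hinj using hlabel
  exact ⟨e, hmem, hinj⟩

lemma IsLabelling.image_univ (he : IsLabelling 𝓔 e) (hE : E ∈ 𝓔) (hcard : #E = k) :
    univ.image (e E) = E := by
  refine eq_of_subset_of_card_le (image_subset_iff.2 fun i _ ↦ he.mem E hE i) ?_
  rw [card_image_of_injective _ (he.injective E hE), card_fin, hcard]

lemma IsLabelling.injOn {α : Type*} {𝓔 : Finset (Finset α)} {e : Finset α → Fin k → α}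
    (he : IsLabelling 𝓔 e) (h𝓔 : (𝓔 : Set (Finset α)).PairwiseDisjoint id) (i : Fin k) :
    Set.InjOn (fun E ↦ e E i) 𝓔 := fun E hE E' hE' (h : e E i = e E' i) ↦
  h𝓔.elim_finset hE hE' (e E i) (he.mem E hE i) (h ▸ he.mem E' hE' i)

lemma IsLabelling.disjoint_labelRow_of_notMem (he : IsLabelling 𝓔 e)
    (h𝓔 : (𝓔 : Set (Finset α)).PairwiseDisjoint id) (hQ : Q ⊆ 𝓔) (hE : E ∈ 𝓔 \ Q) (i : Fin k) :
    Disjoint (labelRow e i Q) E := by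
  obtain ⟨hE𝓔, hEQ⟩ := mem_sdiff.1 hE
  refine disjoint_left.2 fun z hz hzE ↦ ?_
  obtain ⟨E', hE', rfl⟩ := mem_image.1 hz
  exact hEQ (h𝓔.elim_finset hE𝓔 (hQ hE') _ hzE (he.mem E' (hQ hE') i) ▸ hE')

lemma IsLabelling.disjoint_labelRow_labelRow (he : IsLabelling 𝓔 e)
    (h𝓔 : (𝓔 : Set (Finset α)).PairwiseDisjoint id) (hQ : Q ⊆ 𝓔) {i j : Fin k} (hij : i ≠ j) :
    Disjoint (labelRow e i Q) (labelRow e j Q) := by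
  refine disjoint_left.2 fun z hi hj ↦ ?_
  obtain ⟨E, hE, rfl⟩ := mem_image.1 hi
  obtain ⟨E', hE', h⟩ := mem_image.1 hj
  obtain rfl := h𝓔.elim_finset (hQ hE') (hQ hE) _ (h ▸ he.mem E' (hQ hE') j) (he.mem E (hQ hE) i)
  exact hij (he.injective E' (hQ hE) h.symm)

lemma IsLabelling.labelRow_mem_powersetCard (he : IsLabelling 𝓔 e)
    (h𝓔 : IsMatchingIn 𝓔 (powersetCard k V)) (hQ : Q ⊆ 𝓔) (i : Fin k) :
    labelRow e i Q ∈ powersetCard #Q V := by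
  refine mem_powersetCard.2 ⟨image_subset_iff.2 fun E hE ↦ ?_,
    card_image_of_injOn ((he.injOn h𝓔.pairwiseDisjoint i).mono hQ)⟩
  exact (mem_powersetCard.1 (h𝓔.subset (hQ hE))).1 (he.mem E (hQ hE) i)

lemma IsLabelling.isMatchingIn_sdiff_union_image_labelRow (he : IsLabelling 𝓔 e)
    (h𝓔 : (𝓔 : Set (Finset α)).PairwiseDisjoint id) (hQ : Q ⊆ 𝓔) (hF : 𝓔 \ Q ⊆ F)
    (hrow : ∀ i, labelRow e i Q ∈ F) :
    IsMatchingIn (𝓔 \ Q ∪ univ.image fun i ↦ labelRow e i Q) F := by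
  refine ⟨union_subset hF (image_subset_iff.2 fun i _ ↦ hrow i), ?_⟩
  rw [coe_union, coe_image, coe_univ, Set.image_univ, Set.pairwiseDisjoint_union]
  refine ⟨h𝓔.subset (coe_subset.2 sdiff_subset), ?_, ?_⟩
  · rintro _ ⟨i, rfl⟩ _ ⟨j, rfl⟩ hij
    exact he.disjoint_labelRow_labelRow h𝓔 hQ (ne_of_apply_ne (labelRow e · Q) hij)
  · rintro E hE _ ⟨i, rfl⟩ -
    exact (he.disjoint_labelRow_of_notMem h𝓔 hQ hE i).symm

lemma IsLabelling.card_sdiff_union_image_labelRow (he : IsLabelling 𝓔 e)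
    (h𝓔 : (𝓔 : Set (Finset α)).PairwiseDisjoint id) (hQ : Q ⊆ 𝓔) (hcard : #Q = k) (hk : 1 ≤ k) :
    #(𝓔 \ Q ∪ univ.image fun i ↦ labelRow e i Q) = #𝓔 := by
  have hne (i : Fin k) : (labelRow e i Q).Nonempty := (card_pos.1 (hcard ▸ hk)).image _
  have hinj : Function.Injective (labelRow e · Q) :=
    fun i j (hij : labelRow e i Q = labelRow e j Q) ↦ by
      by_contra hne'
      have hself := he.disjoint_labelRow_labelRow h𝓔 hQ hne'
      rw [hij] at hself
      exact (hne j).ne_empty (disjoint_self.1 hself)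
  have hdisj : Disjoint (𝓔 \ Q) (univ.image (labelRow e · Q)) := disjoint_left.2 fun E hE hrow ↦ by
    obtain ⟨i, -, rfl⟩ := mem_image.1 hrow
    exact (hne i).ne_empty (disjoint_self.1 (he.disjoint_labelRow_of_notMem h𝓔 hQ hE i))
  rw [card_union_of_disjoint hdisj, card_image_of_injective _ hinj, card_fin, ← hcard,
    card_sdiff_add_card_eq_card hQ]

end Labelling

section Exchange

variable {e : Finset α → Fin k → α}

lemma IsLabelling.card_filter_labelRow_notMem_le (hk : 1 ≤ k) (he : IsLabelling (insert U M) e)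
    (hUM : U ∉ M) (hmatch : IsMatchingIn (insert U M) (powersetCard k V)) (hM' : M' ⊆ M)
    (i : Fin k) :
    #{P ∈ powersetCard (k - 1) M' | labelRow e i (insert U P) ∉ F} ≤
      vertexDegree (powersetCard k V \ F) (e U i) := by
  refine card_le_card_of_injOn (fun P ↦ labelRow e i (insert U P)) (fun P hP ↦ ?_)
    fun P hP P' hP' h ↦ ?_
  · obtain ⟨hP, hPF⟩ := mem_filter.1 hP
    obtain ⟨hPM', hPcard⟩ := mem_powersetCard.1 hP
    have hrow := he.labelRow_mem_powersetCard hmatch (insert_subset_insert U (hPM'.trans hM')) i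
    rw [card_insert_of_notMem fun hUP ↦ hUM (hM' (hPM' hUP)), hPcard, Nat.sub_add_cancel hk] at hrow
    exact mem_filter.2 ⟨mem_sdiff.2 ⟨hrow, hPF⟩, mem_image_of_mem _ (mem_insert_self U P)⟩
  · have hPM : P ⊆ M := (mem_powersetCard.1 (mem_filter.1 hP).1).1.trans hM'
    have hP'M : P' ⊆ M := (mem_powersetCard.1 (mem_filter.1 hP').1).1.trans hM'
    have hinsert : insert U P = insert U P' := by
      rw [← coe_inj]
      refine ((he.injOn hmatch.pairwiseDisjoint i).image_eq_image_iff (insert_subset_insert U hPM)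
        (insert_subset_insert U hP'M)).1 ?_
      simpa only [labelRow, ← coe_image, coe_inj] using h
    rw [← erase_insert fun hU ↦ hUM (hPM hU), hinsert, erase_insert fun hU ↦ hUM (hP'M hU)]

lemma IsLabelling.exists_forall_labelRow_mem (hk : 1 ≤ k) (he : IsLabelling (insert U M) e)
    (hUM : U ∉ M) (hmatch : IsMatchingIn (insert U M) (powersetCard k V)) (hM' : M' ⊆ M)
    (hdeg : ∑ v ∈ U, vertexDegree (powersetCard k V \ F) v < (#M').choose (k - 1)) :
    ∃ P ∈ powersetCard (k - 1) M', ∀ i, labelRow e i (insert U P) ∈ F := by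
  have hU := mem_insert_self U M
  have hbad : #(univ.biUnion fun i ↦
      {P ∈ powersetCard (k - 1) M' | labelRow e i (insert U P) ∉ F}) <
        #(powersetCard (k - 1) M') := by
    calc _ ≤ ∑ i, vertexDegree (powersetCard k V \ F) (e U i) :=
          card_biUnion_le.trans <| sum_le_sum fun i _ ↦
            he.card_filter_labelRow_notMem_le hk hUM hmatch hM' i
      _ = ∑ v ∈ U, vertexDegree (powersetCard k V \ F) v := by
          rw [← sum_image fun i _ j _ h ↦ he.injective U hU h,
            he.image_univ hU (mem_powersetCard.1 (hmatch.subset hU)).2]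
      _ < #(powersetCard (k - 1) M') := by rwa [card_powersetCard]
  obtain ⟨P, hP, hPbad⟩ := exists_mem_notMem_of_card_lt_card hbad
  refine ⟨P, hP, fun i ↦ ?_⟩
  by_contra hi
  exact hPbad (mem_biUnion.2 ⟨i, mem_univ i, mem_filter.2 ⟨hP, hi⟩⟩)

end Exchange

/-- Picking `k - 1` edges of `M'` at random, the `k` rows of the `k × k` matrix formed by them and
`U` are all edges of `F` with positive probability; exchange columns for rows. -/
theorem IsMatchingIn.exists_card_eq_add_one (hk : 1 ≤ k) (hF : F ⊆ powersetCard k V)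
    (hM : IsMatchingIn M F) (hM' : M' ⊆ M) (hU : U ∈ powersetCard k V)
    (hUM : Disjoint U (M.biUnion id))
    (hdeg : ∑ v ∈ U, vertexDegree (powersetCard k V \ F) v < (#M').choose (k - 1)) :
    ∃ N, IsMatchingIn N F ∧ M \ M' ⊆ N ∧ #N = #M + 1 := by
  obtain ⟨u, hu⟩ : U.Nonempty := card_pos.1 ((mem_powersetCard.1 hU).2 ▸ hk)
  have hUnotMem : U ∉ M := fun h ↦ disjoint_left.1 hUM hu (mem_biUnion.2 ⟨U, h, hu⟩)
  have hmatch : IsMatchingIn (insert U M) (powersetCard k V) :=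
    IsMatchingIn.insert_of_disjoint ⟨hM.subset.trans hF, hM.pairwiseDisjoint⟩ hU hUM
  have : Nonempty α := ⟨u⟩
  obtain ⟨e, he⟩ := exists_isLabelling fun E hE ↦ (mem_powersetCard.1 (hmatch.subset hE)).2
  obtain ⟨P, hP, hrow⟩ := he.exists_forall_labelRow_mem hk hUnotMem hmatch hM' hdeg
  obtain ⟨hPM', hPcard⟩ := mem_powersetCard.1 hP
  have hQ : insert U P ⊆ insert U M := insert_subset_insert U (hPM'.trans hM')
  have hcard : #(insert U P) = k := by
    rw [card_insert_of_notMem fun h ↦ hUnotMem (hM' (hPM' h)), hPcard, Nat.sub_add_cancel hk]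
  have hsdiff : insert U M \ insert U P = M \ P := by grind
  refine ⟨_, he.isMatchingIn_sdiff_union_image_labelRow hmatch.pairwiseDisjoint hQ
    (hsdiff ▸ sdiff_subset.trans hM.subset) hrow, ?_, ?_⟩
  · rw [hsdiff]
    exact (sdiff_subset_sdiff Subset.rfl hPM').trans subset_union_left
  · rw [he.card_sdiff_union_image_labelRow hmatch.pairwiseDisjoint hQ hcard hk,
      card_insert_of_notMem hUnotMem]

end Augmentation

section PerfectMatching

open Finset

variable {α : Type*} [DecidableEq α] {k t b d : ℕ} {V : Finset α} {F M M₁ : Finset (Finset α)}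

lemma IsMatchingIn.exists_superset_max {α : Type*} {F M₁ : Finset (Finset α)}
    (hM₁ : IsMatchingIn M₁ F) :
    ∃ M, IsMatchingIn M F ∧ M₁ ⊆ M ∧ ∀ N, IsMatchingIn N F → M₁ ⊆ N → #N ≤ #M := by
  classical
  obtain ⟨M, hM, hmax⟩ := exists_max_image {M ∈ F.powerset | IsMatchingIn M F ∧ M₁ ⊆ M} card
    ⟨M₁, mem_filter.2 ⟨mem_powerset.2 hM₁.subset, hM₁, Subset.rfl⟩⟩
  obtain ⟨-, hM, hM₁M⟩ := mem_filter.1 hM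
  exact ⟨M, hM, hM₁M, fun N hN hM₁N ↦
    hmax N (mem_filter.2 ⟨mem_powerset.2 hN.subset, hN, hM₁N⟩)⟩

lemma IsMatchingIn.powersetCard_sdiff_subset (hk : 1 ≤ k) (hM : IsMatchingIn M F) (hM₁M : M₁ ⊆ M)
    (hmax : ∀ N, IsMatchingIn N F → M₁ ⊆ N → #N ≤ #M) :
    powersetCard k (V \ M.biUnion id) ⊆ powersetCard k V \ F := by
  intro A hA
  obtain ⟨hAU, hcard⟩ := mem_powersetCard.1 hA
  refine mem_sdiff.2 ⟨mem_powersetCard.2 ⟨hAU.trans sdiff_subset, hcard⟩, fun hAF ↦ ?_⟩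
  have hdisj : Disjoint A (M.biUnion id) := disjoint_of_subset_left hAU sdiff_disjoint
  obtain ⟨z, hz⟩ : A.Nonempty := card_pos.1 (hcard ▸ hk)
  have hAM : A ∉ M := fun h ↦ disjoint_left.1 hdisj hz (mem_biUnion.2 ⟨A, h, hz⟩)
  have := hmax _ (hM.insert_of_disjoint hAF hdisj) (hM₁M.trans (subset_insert A M))
  rw [card_insert_of_notMem hAM] at this
  lia

lemma IsMatchingIn.le_two_mul_card (hk : 1 ≤ k) (hV : #V = k * t) (hF : F ⊆ powersetCard k V)
    (hM : IsMatchingIn M F) (hsub : powersetCard k (V \ M.biUnion id) ⊆ powersetCard k V \ F)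
    (hmissing : #(powersetCard k V \ F) < (k * t / 2).choose k) : t ≤ 2 * #M := by
  have huncovered := card_sdiff_add_card_eq_card (hM.biUnion_id_subset hF)
  rw [hM.card_biUnion_id hF, hV] at huncovered
  have hlt : (#(V \ M.biUnion id)).choose k < (k * t / 2).choose k := by
    rw [← card_powersetCard]
    exact (card_le_card hsub).trans_lt hmissing
  have : #(V \ M.biUnion id) < k * t / 2 := by
    by_contra! hle
    exact hlt.not_ge (Nat.choose_le_choose k hle)
  exact Nat.le_of_mul_le_mul_left (by lia : k * t ≤ k * (2 * #M)) hk

theorem IsMatchingIn.exists_superset_card_eq (hk : 1 ≤ k) (hV : #V = k * t)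
    (hF : F ⊆ powersetCard k V) (hM₁ : IsMatchingIn M₁ F) (hM₁t : 4 * #M₁ ≤ t)
    (hdeg : ∀ v ∈ V \ M₁.biUnion id, d * vertexDegree (powersetCard k V \ F) v ≤ b)
    (hb : k * b < d * (t / 4).choose (k - 1))
    (hmissing : #(powersetCard k V \ F) < (k * t / 2).choose k) :
    ∃ M, IsMatchingIn M F ∧ M₁ ⊆ M ∧ #M = t := by
  obtain ⟨M, hM, hM₁M, hmax⟩ := hM₁.exists_superset_max
  refine ⟨M, hM, hM₁M, ?_⟩
  have huncovered : #(V \ M.biUnion id) + k * #M = k * t := by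
    rw [← hV, ← hM.card_biUnion_id hF, card_sdiff_add_card_eq_card (hM.biUnion_id_subset hF)]
  have hMt : #M ≤ t := Nat.le_of_mul_le_mul_left (by lia : k * #M ≤ k * t) hk
  by_contra hne
  have hlt : k * (#M + 1) ≤ k * t := Nat.mul_le_mul_left k (by lia)
  have hthalf := hM.le_two_mul_card hk hV hF (hM.powersetCard_sdiff_subset hk hM₁M hmax) hmissing
  have hfree : t / 4 ≤ #(M \ M₁) := by rw [card_sdiff_of_subset hM₁M]; lia
  obtain ⟨U, hU, hUcard⟩ := exists_subset_card_eq (by lia : k ≤ #(V \ M.biUnion id))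
  have hsum : d * ∑ v ∈ U, vertexDegree (powersetCard k V \ F) v ≤ k * b := by
    rw [mul_sum]
    refine (sum_le_card_nsmul _ _ b fun v hv ↦ ?_).trans_eq (by rw [hUcard, smul_eq_mul])
    exact hdeg v
      (sdiff_subset_sdiff Subset.rfl (biUnion_subset_biUnion_of_subset_left _ hM₁M) (hU hv))
  obtain ⟨N, hN, hMN, hNcard⟩ := hM.exists_card_eq_add_one hk hF (M' := M \ M₁) sdiff_subset
    (mem_powersetCard.2 ⟨hU.trans sdiff_subset, hUcard⟩)
    (disjoint_of_subset_left hU sdiff_disjoint)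
    ((lt_of_mul_lt_mul_left (hsum.trans_lt hb) d.zero_le).trans_le
      (Nat.choose_le_choose _ hfree))
  rw [Finset.sdiff_sdiff_eq_self hM₁M] at hMN
  have := hmax N hN hMN
  lia

end PerfectMatching

section Asymptotics

open Filter

lemma pow_le_mul_choose_div {c r n : ℕ} (hc : 0 < c) (hn : 2 * c * r ≤ n) :
    n ^ r ≤ (2 * c) ^ r * r.factorial * (n / c).choose r := by
  have hr : 2 * r ≤ n / c := (Nat.le_div_iff_mul_le hc).2 (by linarith)
  have hbase : n ≤ 2 * c * (n / c + 1 - r) :=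
    calc n ≤ c * (n / c + 1) := (Nat.lt_mul_div_succ n hc).le
      _ ≤ c * (2 * (n / c + 1 - r)) := Nat.mul_le_mul_left c (by lia)
      _ = 2 * c * (n / c + 1 - r) := by ring
  calc n ^ r ≤ (2 * c) ^ r * (n / c + 1 - r) ^ r := by
        rw [← mul_pow]
        exact Nat.pow_le_pow_left hbase r
    _ ≤ (2 * c) ^ r * (n / c).descFactorial r :=
        Nat.mul_le_mul_left _ (Nat.pow_sub_le_descFactorial _ _)
    _ = (2 * c) ^ r * r.factorial * (n / c).choose r := by
        rw [Nat.descFactorial_eq_factorial_mul_choose, mul_assoc]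

lemma exists_eventually_mul_pow_lt_mul_choose_div (a r : ℕ) {c : ℕ} (hc : 0 < c) :
    ∃ d, ∀ᶠ n : ℕ in atTop, a * n ^ r < d * (n / c).choose r := by
  refine ⟨a * ((2 * c) ^ r * r.factorial) + 1, ?_⟩
  filter_upwards [eventually_ge_atTop (2 * c * r)] with n hn
  have hpos : 0 < (n / c).choose r :=
    Nat.choose_pos ((Nat.le_div_iff_mul_le hc).2 (by linarith [Nat.zero_le (c * r)]))
  have := Nat.mul_le_mul_left a (pow_le_mul_choose_div hc hn)
  linarith

lemma eventually_mul_pow_sub_one_lt_choose_div (a : ℕ) {c k : ℕ} (hc : 0 < c) (hk : 1 ≤ k) :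
    ∀ᶠ n : ℕ in atTop, a * n ^ (k - 1) < (n / c).choose k := by
  set q := (2 * c) ^ k * k.factorial
  filter_upwards [eventually_ge_atTop (2 * c * k), eventually_gt_atTop (q * a)] with n hn hqn
  refine lt_of_mul_lt_mul_left ?_ q.zero_le
  calc q * (a * n ^ (k - 1)) = q * a * n ^ (k - 1) := by ring
    _ < n * n ^ (k - 1) := Nat.mul_lt_mul_of_pos_right hqn (pow_pos (by lia) _)
    _ = n ^ k := mul_pow_sub_one (by lia) n
    _ ≤ q * (n / c).choose k := pow_le_mul_choose_div hc hn

lemma eventually_mul_choose_sub_two_lt_choose_sub_one (a : ℕ) {k : ℕ} (hk : 2 ≤ k) :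
    ∀ᶠ n : ℕ in atTop, a * (n - 2).choose (k - 2) < (n - 1).choose (k - 1) := by
  obtain ⟨r, rfl⟩ := Nat.exists_eq_add_of_le' hk
  filter_upwards [eventually_ge_atTop (r + 2), eventually_ge_atTop (a * (r + 1) + 2)] with n hr hn
  obtain ⟨m, rfl⟩ := Nat.exists_eq_add_of_le' (by lia : 2 ≤ n)
  refine lt_of_mul_lt_mul_right ?_ (r + 1).zero_le
  calc a * m.choose r * (r + 1) = a * (r + 1) * m.choose r := by ring
    _ < (m + 1) * m.choose r :=
        Nat.mul_lt_mul_of_pos_right (by lia) (Nat.choose_pos (by lia))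
    _ = (m + 1).choose (r + 1) * (r + 1) := Nat.add_one_mul_choose_eq m r

end Asymptotics

section EventualPerfectMatching

open Filter Finset

variable {α : Type*} [DecidableEq α] {k : ℕ}

lemma tendsto_mul_left_atTop (hk : 1 ≤ k) : Tendsto (fun t : ℕ ↦ k * t) atTop atTop :=
  tendsto_atTop_mono (fun t ↦ Nat.le_mul_of_pos_left t hk) tendsto_id

/-- The few vertices missing too many edges are first covered greedily, together with `M₀`; all
remaining vertices are then suitable for augmentation. -/
theorem eventually_exists_perfect_matching (hk : 2 ≤ k) (m c q : ℕ) :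
    ∀ᶠ t in atTop, ∀ (V : Finset α) (F M₀ : Finset (Finset α)), #V = k * t →
      F ⊆ powersetCard k V → #(powersetCard k V \ F) ≤ c * (k * t) ^ (k - 1) →
      IsMatchingIn M₀ F → #M₀ ≤ m →
      (∀ v ∈ V \ M₀.biUnion id, (k * t - 1).choose (k - 1) ≤ q * vertexDegree F v) →
      ∃ M, IsMatchingIn M F ∧ M₀ ⊆ M ∧ #M = t := by
  obtain ⟨d, hd⟩ := exists_eventually_mul_pow_lt_mul_choose_div (k ^ k) (k - 1) four_pos
  have hkt := tendsto_mul_left_atTop (by lia : 1 ≤ k)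
  set l := d * (k * c) with hl
  filter_upwards [hd, eventually_ge_atTop 1, eventually_ge_atTop (4 * (m + l)),
    hkt.eventually (eventually_mul_pow_sub_one_lt_choose_div c two_pos (by lia : 1 ≤ k)),
    hkt.eventually (eventually_mul_choose_sub_two_lt_choose_sub_one (q * (k * (m + l))) hk)]
    with t hd ht1 htl hmany hcodeg V F M₀ hV hF hmissing hM₀ hM₀m hdeg
  set G := powersetCard k V \ F
  set L := {v ∈ V | (k * t) ^ (k - 1) < d * vertexDegree G v}
  have hLcard : #L ≤ l := by
    refine Nat.le_of_mul_le_mul_right (c := (k * t) ^ (k - 1)) ?_ (by positivity)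
    calc #L * (k * t) ^ (k - 1) ≤ d * (k * #G) :=
          card_filter_lt_mul_vertexDegree_mul_le sdiff_subset _ _
      _ ≤ d * (k * (c * (k * t) ^ (k - 1))) := by gcongr
      _ = l * (k * t) ^ (k - 1) := by rw [hl]; ring
  obtain ⟨M₁, hM₁, hM₀M₁, hM₁card, hLM₁⟩ := hM₀.exists_superset_cover hF (filter_subset _ V : L ⊆ V)
    (b := k * (m + l)) (by gcongr) fun v hv ↦ by
      rw [hV]
      refine lt_of_mul_lt_mul_left (?_ : q * _ < q * _) q.zero_le
      rw [← mul_assoc]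
      exact hcodeg.trans_le (hdeg v (sdiff_subset_sdiff (filter_subset _ V) Subset.rfl hv))
  have hkpow : k * (k * t) ^ (k - 1) = k ^ k * t ^ (k - 1) := by
    rw [mul_pow, ← mul_assoc, mul_pow_sub_one (by lia)]
  have hlow : ∀ v ∈ V \ M₁.biUnion id, d * vertexDegree G v ≤ (k * t) ^ (k - 1) := fun v hv ↦ by
    by_contra! hlt
    exact (mem_sdiff.1 hv).2 (hLM₁ (mem_filter.2 ⟨(mem_sdiff.1 hv).1, hlt⟩))
  obtain ⟨M, hM, hM₁M, hMt⟩ := hM₁.exists_superset_card_eq (by lia) hV hF (by lia) hlow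
    (hkpow ▸ hd) (hmissing.trans_lt hmany)
  exact ⟨M, hM, hM₀M₁.trans hM₁M, hMt⟩

end EventualPerfectMatching

section Obstruction

open Finset

variable {α : Type*} [DecidableEq α] {k : ℕ} {V H : Finset α} {F : Finset (Finset α)} {x y z : α}

lemma vertexDegree_add_vertexDegree_add_vertexDegree_le (hF : F ⊆ powersetCard k V) (hx : x ∈ V)
    (hy : y ∈ V) (hz : z ∈ V) (hxy : x ≠ y) (hxz : x ≠ z) (hyz : y ≠ z) :
    vertexDegree F x + vertexDegree F y + vertexDegree F z ≤
      #F + 3 * (#V - 2).choose (k - 2) := by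
  have hunion : #({A ∈ F | x ∈ A} ∪ {A ∈ F | y ∈ A} ∪ {A ∈ F | z ∈ A}) ≤ #F :=
    card_le_card (by grind)
  have hinter : #(({A ∈ F | x ∈ A} ∪ {A ∈ F | y ∈ A}) ∩ {A ∈ F | z ∈ A}) ≤
      #{A ∈ F | x ∈ A ∧ z ∈ A} + #{A ∈ F | y ∈ A ∧ z ∈ A} := by
    rw [union_inter_distrib_right, ← filter_and, ← filter_and]
    exact card_union_le _ _
  have hxy_card := card_union_add_card_inter {A ∈ F | x ∈ A} {A ∈ F | y ∈ A}
  have hxyz_card :=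
    card_union_add_card_inter ({A ∈ F | x ∈ A} ∪ {A ∈ F | y ∈ A}) {A ∈ F | z ∈ A}
  rw [← filter_and] at hxy_card
  have := card_filter_mem_mem_le hF hx hy hxy
  have := card_filter_mem_mem_le hF hx hz hxz
  have := card_filter_mem_mem_le hF hy hz hyz
  unfold vertexDegree
  lia

lemma card_filter_four_mul_vertexDegree_lt_le_two (hk : 1 ≤ k) (hF : F ⊆ powersetCard k V)
    (hcodeg : 12 * (#V - 2).choose (k - 2) ≤ (#V - 1).choose (k - 1))
    (hmissing : #(powersetCard k V \ F) < 2 * (#V - 1).choose (k - 1)) :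
    #{v ∈ V | 4 * vertexDegree F v < (#V - 1).choose (k - 1)} ≤ 2 := by
  by_contra! h
  obtain ⟨x, y, z, hx, hy, hz, hxy, hxz, hyz⟩ := two_lt_card_iff.1 h
  rw [mem_filter] at hx hy hz
  have hdegree {v : α} (hv : v ∈ V) := (vertexDegree_add_vertexDegree_sdiff hF v).trans
    (vertexDegree_powersetCard hk hv)
  have := hdegree hx.1
  have := hdegree hy.1
  have := hdegree hz.1
  have := vertexDegree_add_vertexDegree_add_vertexDegree_le
    (sdiff_subset : powersetCard k V \ F ⊆ powersetCard k V) hx.1 hy.1 hz.1 hxy hxz hyz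
  lia

lemma isMatchingIn_pair {A B : Finset α} (hA : A ∈ F) (hB : B ∈ F) (hAB : Disjoint A B) :
    IsMatchingIn {A, B} F :=
  IsMatchingIn.insert_of_disjoint ⟨singleton_subset_iff.2 hB, by simp⟩ hA (by simpa using hAB)

lemma exists_cross_intersecting_of_not_covered (hH : #H ≤ 2) (hcover : ∀ v ∈ H, ∃ A ∈ F, v ∈ A)
    (hblock : ∀ M, IsMatchingIn M F → #M ≤ 2 → ¬ H ⊆ M.biUnion id) :
    ∃ x ∈ H, ∃ y ∈ H, x ≠ y ∧ (∀ A ∈ F, x ∈ A → y ∉ A) ∧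
      ∀ A ∈ F, ∀ B ∈ F, x ∈ A → y ∈ B → ¬ Disjoint A B := by
  have hsingle : ∀ A ∈ F, ¬ H ⊆ A := fun A hA hHA ↦
    hblock {A} ⟨singleton_subset_iff.2 hA, by simp⟩ (by simp) (by simpa using hHA)
  have hcard : #H = 2 := by
    by_contra hne
    rcases H.eq_empty_or_nonempty with rfl | hHne
    · exact hblock ∅ ⟨empty_subset F, by simp⟩ (by simp) (empty_subset _)
    · have := hHne.card_pos
      obtain ⟨x, rfl⟩ := card_eq_one.1 (by lia : #H = 1)
      obtain ⟨A, hA, hxA⟩ := hcover x (mem_singleton_self x)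
      exact hsingle A hA (singleton_subset_iff.2 hxA)
  obtain ⟨x, y, hxy, rfl⟩ := card_eq_two.1 hcard
  refine ⟨x, by simp, y, by simp, hxy, fun A hA hxA hyA ↦ hsingle A hA ?_,
    fun A hA B hB hxA hyB hAB ↦ hblock {A, B} (isMatchingIn_pair hA hB hAB) card_le_two ?_⟩
  · simp [insert_subset_iff, hxA, hyA]
  · simp [insert_subset_iff, hxA, hyB]

lemma memberSubfamily_subset_powersetCard (hF : F ⊆ powersetCard k V)
    (hxy : ∀ A ∈ F, x ∈ A → y ∉ A) :
    F.memberSubfamily x ⊆ powersetCard (k - 1) ((V.erase x).erase y) := by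
  intro A hA
  obtain ⟨hAF, hxA⟩ := mem_memberSubfamily.1 hA
  obtain ⟨hAV, hAk⟩ := mem_powersetCard.1 (hF hAF)
  have hyA := hxy _ hAF (mem_insert_self x A)
  rw [card_insert_of_notMem hxA] at hAk
  exact mem_powersetCard.2 ⟨by grind, by lia⟩

lemma memberSubfamily_nonempty (h : ∃ A ∈ F, x ∈ A) : (F.memberSubfamily x).Nonempty := by
  obtain ⟨A, hA, hxA⟩ := h
  exact ⟨A.erase x, mem_memberSubfamily.2 ⟨by rwa [insert_erase hxA], notMem_erase x A⟩⟩

lemma card_le_card_memberSubfamily_add_choose (hF : F ⊆ powersetCard k V) (hx : x ∈ V)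
    (hy : y ∈ V) (hxy : x ≠ y) :
    #F ≤ #(F.memberSubfamily x) + #(F.memberSubfamily y) + (#V - 2).choose k := by
  have hrest : (F.nonMemberSubfamily x).nonMemberSubfamily y ⊆
      powersetCard k ((V.erase x).erase y) := fun A hA ↦ by
    simp only [mem_nonMemberSubfamily] at hA
    obtain ⟨hAV, hAk⟩ := mem_powersetCard.1 (hF hA.1.1)
    exact mem_powersetCard.2 ⟨by grind, hAk⟩
  have hrest_card := card_le_card hrest
  rw [card_powersetCard, card_erase_of_mem (mem_erase.2 ⟨hxy.symm, hy⟩), card_erase_of_mem hx,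
    Nat.sub_sub] at hrest_card
  have hy_le : #((F.nonMemberSubfamily x).memberSubfamily y) ≤ #(F.memberSubfamily y) :=
    card_le_card fun A hA ↦ by
      simp only [mem_memberSubfamily, mem_nonMemberSubfamily] at hA ⊢
      exact ⟨hA.1.1, hA.2⟩
  have := card_memberSubfamily_add_card_nonMemberSubfamily x F
  have := card_memberSubfamily_add_card_nonMemberSubfamily y (F.nonMemberSubfamily x)
  lia

lemma card_sdiff_lt_two_mul_choose (hk : 1 ≤ k) (hV : 2 ≤ #V) (hF : F ⊆ powersetCard k V)
    (hcard : (#V - 2).choose k + (#V - 2).choose (k - 1) + 1 <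
      #F + (#V - 2 - (k - 1)).choose (k - 1)) :
    #(powersetCard k V \ F) < 2 * (#V - 1).choose (k - 1) := by
  have hsum := card_sdiff_add_card_eq_card hF
  rw [card_powersetCard] at hsum
  obtain ⟨r, rfl⟩ := Nat.exists_eq_add_of_le' hk
  obtain ⟨m, hm⟩ := Nat.exists_eq_add_of_le' hV
  simp only [hm, Nat.add_sub_cancel,
    (by lia : m + 2 - 1 = m + 1)] at hsum hcard ⊢
  have := Nat.choose_succ_succ (m + 1) r
  have := Nat.choose_succ_succ m r
  have := Nat.choose_le_choose r (by lia : m - r ≤ m + 1)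
  lia

end Obstruction

section Extremal

open Filter Finset

variable {α : Type*} {k : ℕ}

lemma card_add_choose_le_of_cross_intersecting_at {V : Finset α} {F : Finset (Finset α)} {x y : α}
    (hV : 2 * k < #V) (hF : F ⊆ powersetCard k V) (hx : x ∈ V) (hy : y ∈ V) (hxy : x ≠ y)
    (hxF : ∃ A ∈ F, x ∈ A) (hyF : ∃ A ∈ F, y ∈ A) (hnot_both : ∀ A ∈ F, x ∈ A → y ∉ A)
    (hcross : ∀ A ∈ F, ∀ B ∈ F, x ∈ A → y ∈ B → ¬ Disjoint A B) :
    #F + (#V - 2 - (k - 1)).choose (k - 1) ≤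
      (#V - 2).choose k + (#V - 2).choose (k - 1) + 1 := by
  classical
  have hk : 1 ≤ k := by
    obtain ⟨A, hA, hxA⟩ := hxF
    exact (mem_powersetCard.1 (hF hA)).2 ▸ card_pos.2 ⟨x, hxA⟩
  have hcard : #((V.erase x).erase y) = #V - 2 := by
    rw [card_erase_of_mem (mem_erase.2 ⟨hxy.symm, hy⟩), card_erase_of_mem hx, Nat.sub_sub]
  have hlink_y : F.memberSubfamily y ⊆ powersetCard (k - 1) ((V.erase x).erase y) := by
    rw [erase_right_comm]
    exact memberSubfamily_subset_powersetCard hF fun A hA hyA hxA ↦ hnot_both A hA hxA hyA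
  have hlinks_cross : ∀ A ∈ F.memberSubfamily x, ∀ B ∈ F.memberSubfamily y, ¬ Disjoint A B := by
    intro A hA B hB hAB
    rw [mem_memberSubfamily] at hA hB
    have hyA := hnot_both _ hA.1 (mem_insert_self x A)
    have hxB : x ∉ insert y B := fun h ↦ hnot_both _ hB.1 h (mem_insert_self y B)
    refine hcross _ hA.1 _ hB.1 (mem_insert_self x A) (mem_insert_self y B) ?_
    exact disjoint_insert_left.2 ⟨hxB, disjoint_insert_right.2 ⟨by grind, hAB⟩⟩
  have hlinks := card_add_card_add_choose_le_of_cross_intersecting (by lia)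
    (memberSubfamily_subset_powersetCard hF hnot_both) hlink_y
    (memberSubfamily_nonempty hxF) (memberSubfamily_nonempty hyF) hlinks_cross
  rw [hcard] at hlinks
  have := card_le_card_memberSubfamily_add_choose hF hx hy hxy
  lia

/-- If the bound fails, at most two vertices lack the degree needed for a perfect matching, and
these can only obstruct it when their links are nonempty and cross-intersecting. -/
theorem eventually_card_add_choose_le_of_forall_matching_card_lt (hk : 2 ≤ k) :
    ∀ᶠ t in atTop, ∀ (V : Finset α) (F : Finset (Finset α)), #V = k * t →
      F ⊆ powersetCard k V → (∀ v ∈ V, ∃ A ∈ F, v ∈ A) → (∀ M, IsMatchingIn M F → #M < t) →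
      #F + (k * t - 2 - (k - 1)).choose (k - 1) ≤
        (k * t - 2).choose k + (k * t - 2).choose (k - 1) + 1 := by
  classical
  have hkt := tendsto_mul_left_atTop (by lia : 1 ≤ k)
  filter_upwards [eventually_exists_perfect_matching (α := α) hk 2 2 4, eventually_ge_atTop 3,
    hkt.eventually (eventually_mul_choose_sub_two_lt_choose_sub_one 12 hk)]
    with t hperfect ht hcodeg V F hV hF hcover hmatching
  have hk3 : k * 3 ≤ k * t := Nat.mul_le_mul_left k ht
  simp only [← hV] at hperfect hcodeg hk3 ⊢
  by_contra! hlarge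
  have hmissing := card_sdiff_lt_two_mul_choose (by lia) (by lia) hF hlarge
  have hmissing_pow : #(powersetCard k V \ F) ≤ 2 * #V ^ (k - 1) :=
    hmissing.le.trans <| Nat.mul_le_mul_left 2 <|
      (Nat.choose_le_pow _ _).trans (Nat.pow_le_pow_left (Nat.sub_le _ _) _)
  set H := {v ∈ V | 4 * vertexDegree F v < (#V - 1).choose (k - 1)}
  have hHV : H ⊆ V := filter_subset _ V
  have hblock : ∀ M, IsMatchingIn M F → #M ≤ 2 → ¬ H ⊆ M.biUnion id := by
    intro M₀ hM₀ hM₀card hHM₀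
    obtain ⟨M, hM, -, hMt⟩ := hperfect V F M₀ rfl hF hmissing_pow hM₀ hM₀card fun v hv ↦ by
      by_contra! hlt
      exact (mem_sdiff.1 hv).2 (hHM₀ (mem_filter.2 ⟨(mem_sdiff.1 hv).1, hlt⟩))
    exact (hmatching M hM).ne hMt
  obtain ⟨x, hx, y, hy, hxy, hnot_both, hcross⟩ := exists_cross_intersecting_of_not_covered
    (card_filter_four_mul_vertexDegree_lt_le_two (by lia) hF hcodeg.le hmissing)
    (fun v hv ↦ hcover v (hHV hv)) hblock
  exact hlarge.not_ge <| card_add_choose_le_of_cross_intersecting_at (by lia) hF (hHV hx) (hHV hy)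
    hxy (hcover x (hHV hx)) (hcover y (hHV hy)) hnot_both hcross

end Extremal

section ExtremalFamily

open Finset

lemma IsMatchingIn.card_le_matchingNumber {M F : Finset (Finset ℕ)} (hM : IsMatchingIn M F) :
    #M ≤ matchingNumber F := by
  refine le_csSup ⟨#F, ?_⟩ ⟨M, hM.subset, rfl, hM.pairwiseDisjoint⟩
  rintro _ ⟨M', hM', rfl, -⟩
  exact card_le_card hM'

variable {α : Type*} [DecidableEq α] {k : ℕ} {V W R : Finset α} {v : α}

lemma filter_sdiff_eq_singleton_powersetCard (hk : 1 ≤ k) (hWV : W ⊆ V) (hv : v ∈ V \ W)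
    (hRW : R ⊆ W) :
    {A ∈ powersetCard k V | A \ W = {v} ∧ (A ∩ R).Nonempty} =
      (powersetCard (k - 1) W \ powersetCard (k - 1) (W \ R)).image (insert v) := by
  obtain ⟨hvV, hvW⟩ := mem_sdiff.1 hv
  ext A
  simp only [mem_filter, mem_image, mem_sdiff, mem_powersetCard]
  constructor
  · rintro ⟨⟨-, hAk⟩, hAW, w, hw⟩
    have hA : ∀ u, u ∈ A ∧ u ∉ W ↔ u = v := by
      simpa only [Finset.ext_iff, mem_sdiff, mem_singleton] using hAW
    have hvA : v ∈ A := ((hA v).2 rfl).1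
    refine ⟨A.erase v, ⟨⟨by grind, by rw [card_erase_of_mem hvA, hAk]⟩, ?_⟩, insert_erase hvA⟩
    rintro ⟨hsub, -⟩
    have := @hsub w
    grind
  · rintro ⟨B, ⟨⟨hBW, hBk⟩, hBR⟩, rfl⟩
    have hvB : v ∉ B := fun h ↦ hvW (hBW h)
    refine ⟨⟨insert_subset hvV (hBW.trans hWV), by rw [card_insert_of_notMem hvB]; lia⟩,
      by rw [insert_sdiff_of_notMem _ hvW, sdiff_eq_empty_iff_subset.2 hBW, insert_empty], ?_⟩
    rw [← not_disjoint_iff_nonempty_inter]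
    exact fun hdisj ↦ hBR ⟨subset_sdiff.2 ⟨hBW, hdisj.mono_left (subset_insert v B)⟩, hBk⟩

lemma card_filter_sdiff_eq_singleton_powersetCard_add (hk : 1 ≤ k) (hWV : W ⊆ V) (hv : v ∈ V \ W)
    (hRW : R ⊆ W) :
    #{A ∈ powersetCard k V | A \ W = {v} ∧ (A ∩ R).Nonempty} + (#W - #R).choose (k - 1) =
      (#W).choose (k - 1) := by
  have hinj : Set.InjOn (insert v)
      (↑(powersetCard (k - 1) W \ powersetCard (k - 1) (W \ R)) : Set (Finset α)) := by
    refine insert_erase_invOn.2.injOn.mono fun A hA ↦ ?_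
    have hAW : A ⊆ W := (mem_powersetCard.1 (mem_sdiff.1 (mem_coe.1 hA)).1).1
    exact fun hvA ↦ (mem_sdiff.1 hv).2 (hAW hvA)
  rw [filter_sdiff_eq_singleton_powersetCard hk hWV hv hRW, card_image_of_injOn hinj,
    ← card_sdiff_of_subset hRW, ← card_powersetCard, ← card_powersetCard,
    card_sdiff_add_card_eq_card (powersetCard_mono sdiff_subset)]

lemma card_E0_add_choose {n k s : ℕ} (hk : 1 ≤ k) (hs : 1 ≤ s) (hn : k * s + k ≤ n + 1) :
    #(E0 n k s) + (k * s - 1).choose (k - 1) =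
      (k * s + k - 2).choose k + (k * s + k - 2).choose (k - 1) + (n + 1 - (k * s + k)) := by
  have hks : k ≤ k * s := Nat.le_mul_of_pos_right k hs
  have hinj : Set.InjOn (fun x ↦ insert x (Icc 1 (k - 1))) (Icc (k * s + k) n : Finset ℕ) := by
    intro x hx y hy hxy
    rw [mem_coe, mem_Icc] at hx hy
    exact (insert_inj (by grind)).1 hxy
  have hmiddle := card_filter_sdiff_eq_singleton_powersetCard_add (V := Icc 1 n)
    (W := Icc 1 (k * s + k - 2)) (R := Icc 1 (k - 1)) (v := k * s + k - 1) hk (by grind) (by grind)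
    (by grind)
  rw [E0, card_union_of_disjoint, card_union_of_disjoint, card_image_of_injOn hinj]
  · simp only [card_powersetCard, Nat.card_Icc, Nat.add_sub_cancel,
      (by lia : k * s + k - 2 - (k - 1) = k * s - 1)] at hmiddle ⊢
    lia
  · simp only [disjoint_left, mem_filter, mem_powersetCard]
    rintro A ⟨hAW, -⟩ ⟨-, hA, -⟩
    simp [sdiff_eq_empty_iff_subset.2 hAW] at hA
  · simp only [disjoint_left, mem_union, mem_filter, mem_powersetCard, mem_image, mem_Icc]
    rintro _ hA ⟨x, ⟨hx, -⟩, rfl⟩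
    have hxA := mem_insert_self x (Icc 1 (k - 1))
    have hxW : x ∉ Icc 1 (k * s + k - 2) := fun h ↦ by
      have := (mem_Icc.1 h).2
      lia
    rcases hA with ⟨hAW, -⟩ | ⟨-, hA, -⟩
    · exact hxW (hAW hxA)
    · have := mem_singleton.1 (hA ▸ mem_sdiff.2 ⟨hxA, hxW⟩)
      lia

end ExtremalFamily

/-- Frankl's theorem for `n = ks + k`. -/
theorem stmt17 (k : ℕ) (hk : 2 ≤ k) :
    ∃ s₀ : ℕ, 0 < s₀ ∧ ∀ s : ℕ, s₀ < s →
      ∀ F ⊆ Finset.powersetCard k (Finset.Icc 1 (k * s + k)),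
        NonTrivial (k * s + k) F → matchingNumber F ≤ s →
          F.card ≤ (E0 (k * s + k) k s).card := by
  obtain ⟨t₀, hbound⟩ := Filter.eventually_atTop.1
    (eventually_card_add_choose_le_of_forall_matching_card_lt (α := ℕ) hk)
  refine ⟨t₀ + 1, t₀.succ_pos, fun s hs F hF hcover hmatching ↦ ?_⟩
  have hF_card := hbound (s + 1) (by lia) (Finset.Icc 1 (k * s + k)) F
    (by rw [Nat.card_Icc, Nat.add_sub_cancel, mul_add_one]) hF hcover
    fun M hM ↦ Nat.lt_succ_of_le (hM.card_le_matchingNumber.trans hmatching)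
  have hE0_card := card_E0_add_choose (k := k) (s := s) (n := k * s + k) (by lia) (by lia) (by lia)
  rw [mul_add_one, (by lia : k * s + k - 2 - (k - 1) = k * s - 1)] at hF_card
  lia
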